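/- arXiv:1312.0800 — 3 statements merged into one kernel-verified Lean document; each statement's English description precedes it below -/
import Mathlib

section
/- Gaussian integral with linear source: for every b ∈ ℝⁿ, the function x ↦ exp(−(1/2)·⟨x, Q·x⟩ + ⟨b, x⟩) is integrable on ℝⁿ, and ∫ exp(−(1/2)·⟨x, Q·x⟩ + ⟨b, x⟩) dx = (2π)^{n/2} · (det Q)^{−1/2} · exp((1/2)·⟨b, Q⁻¹·b⟩). -/
open Matrix MeasureTheory Real

open scoped MatrixOrder in
/-- A real positive-definite matrix factors as `Bᵀ * B` with `B` nonsingular. -/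
theorem exists_transpose_mul_self_of_posDef {ι : Type*} [Fintype ι] [DecidableEq ι]
    {Q : Matrix ι ι ℝ} (hQ : Q.PosDef) : ∃ B : Matrix ι ι ℝ, Q = Bᵀ * B ∧ B.det ≠ 0 := by
  obtain ⟨B, hB⟩ := CStarAlgebra.nonneg_iff_eq_star_mul_self.mp hQ.posSemidef.nonneg
  rw [star_eq_conjTranspose, conjTranspose_eq_transpose_of_trivial] at hB
  refine ⟨B, hB, fun h => hQ.det_pos.ne' ?_⟩
  rw [hB, det_mul, h, mul_zero]

theorem exp_neg_half_mul_dotProduct_self {ι : Type*} [Fintype ι] (y : ι → ℝ) :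
    Real.exp (-(1 / 2) * (y ⬝ᵥ y)) = ∏ i, Real.exp (-(1 / 2) * y i ^ 2) := by
  simp only [dotProduct, Finset.mul_sum, Real.exp_sum, pow_two]

/-- The standard Gaussian density, up to normalization, is integrable. -/
theorem integrable_exp_neg_half_mul_dotProduct_self (ι : Type*) [Fintype ι] :
    Integrable (fun y : ι → ℝ => Real.exp (-(1 / 2) * (y ⬝ᵥ y))) := by
  simp only [exp_neg_half_mul_dotProduct_self]
  exact Integrable.fintype_prod (f := fun _ t => Real.exp (-(1 / 2) * t ^ 2))
    fun _ => integrable_exp_neg_mul_sq one_half_pos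

theorem integral_exp_neg_half_mul_dotProduct_self (ι : Type*) [Fintype ι] :
    ∫ y : ι → ℝ, Real.exp (-(1 / 2) * (y ⬝ᵥ y)) = (2 * π) ^ ((Fintype.card ι : ℝ) / 2) := by
  simp only [exp_neg_half_mul_dotProduct_self]
  rw [integral_fintype_prod_volume_eq_pow (fun t : ℝ => Real.exp (-(1 / 2) * t ^ 2)),
    integral_gaussian, show π / (1 / 2) = 2 * π by ring, Real.sqrt_eq_rpow,
    ← Real.rpow_mul_natCast (by positivity)]
  congr 1
  ring

/-- Completing the square for the quadratic form of `Bᵀ * B` with a linear source. -/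
theorem neg_half_mul_quadratic_add_source {ι : Type*} [Fintype ι] [DecidableEq ι]
    {B : Matrix ι ι ℝ} (hB : B.det ≠ 0) (b x : ι → ℝ) :
    -(1 / 2) * (x ⬝ᵥ (Bᵀ * B) *ᵥ x) + b ⬝ᵥ x =
      -(1 / 2) * ((B *ᵥ x - b ᵥ* B⁻¹) ⬝ᵥ (B *ᵥ x - b ᵥ* B⁻¹)) +
        1 / 2 * (b ⬝ᵥ (Bᵀ * B)⁻¹ *ᵥ b) := by
  have hquad : x ⬝ᵥ (Bᵀ * B) *ᵥ x = (B *ᵥ x) ⬝ᵥ (B *ᵥ x) := by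
    rw [← mulVec_mulVec, dotProduct_mulVec, vecMul_transpose]
  have hsource : (b ᵥ* B⁻¹) ⬝ᵥ (B *ᵥ x) = b ⬝ᵥ x := by
    rw [dotProduct_mulVec, vecMul_vecMul, nonsing_inv_mul _ hB.isUnit, vecMul_one]
  have hinv : b ⬝ᵥ (Bᵀ * B)⁻¹ *ᵥ b = (b ᵥ* B⁻¹) ⬝ᵥ (b ᵥ* B⁻¹) := by
    rw [Matrix.mul_inv_rev, ← mulVec_mulVec, dotProduct_mulVec, ← transpose_nonsing_inv,
      mulVec_transpose]
  rw [hquad, hinv, sub_dotProduct, dotProduct_sub, dotProduct_sub, hsource,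
    dotProduct_comm (B *ᵥ x) (b ᵥ* B⁻¹), hsource]
  ring

theorem integrable_comp_mulVec {ι : Type*} [Fintype ι] [DecidableEq ι] {B : Matrix ι ι ℝ}
    (hB : B.det ≠ 0) {g : (ι → ℝ) → ℝ} (hg : Integrable g) :
    Integrable (fun x => g (B *ᵥ x)) := by
  have hmap := Real.map_matrix_volume_pi_eq_smul_volume_pi hB
  have hint : Integrable g (Measure.map (toLin' B) volume) := by
    rw [hmap]
    exact hg.smul_measure ENNReal.ofReal_ne_top
  exact hint.comp_measurable (toLin' B).continuous_of_finiteDimensional.measurable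

theorem integral_comp_mulVec {ι : Type*} [Fintype ι] [DecidableEq ι] {B : Matrix ι ι ℝ}
    (hB : B.det ≠ 0) {g : (ι → ℝ) → ℝ} (hg : Integrable g) :
    ∫ x, g (B *ᵥ x) = |B.det|⁻¹ * ∫ y, g y := by
  have hmap := Real.map_matrix_volume_pi_eq_smul_volume_pi hB
  have hmeas : AEStronglyMeasurable g (Measure.map (toLin' B) volume) := by
    rw [hmap]
    exact hg.aestronglyMeasurable.smul_measure _
  have h := integral_map
    (toLin' B).continuous_of_finiteDimensional.measurable.aemeasurable hmeas
  rw [hmap, integral_smul_measure, ENNReal.toReal_ofReal (abs_nonneg _), abs_inv,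
    smul_eq_mul] at h
  exact h.symm

/-- **Gaussian integral with linear source.**
Let `Q` be a real symmetric positive-definite `n × n` matrix.  For every `b ∈ ℝⁿ`,
the function `x ↦ exp (-(1/2)⟨x, Q·x⟩ + ⟨b, x⟩)` is integrable on `ℝⁿ` and
`∫ exp (-(1/2)⟨x, Q·x⟩ + ⟨b, x⟩) dx = (2π)^{n/2} · (det Q)^{-1/2} · exp ((1/2)⟨b, Q⁻¹·b⟩)`. -/
theorem gaussian_integral_with_source (n : ℕ) (Q : Matrix (Fin n) (Fin n) ℝ)
    (hQ : Q.PosDef) (hQsymm : Q.IsSymm) (b : EuclideanSpace ℝ (Fin n)) :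
    Integrable (fun x : EuclideanSpace ℝ (Fin n) =>
        Real.exp (-(1 / 2) * (x ⬝ᵥ Q.mulVec x) + b ⬝ᵥ x)) ∧
    ∫ x : EuclideanSpace ℝ (Fin n),
        Real.exp (-(1 / 2) * (x ⬝ᵥ Q.mulVec x) + b ⬝ᵥ x)
      = (2 * π) ^ ((n : ℝ) / 2) * Q.det ^ (-(1 / 2) : ℝ)
          * Real.exp ((1 / 2) * (b ⬝ᵥ Q⁻¹.mulVec b)) := by
  obtain ⟨B, rfl, hB⟩ := exists_transpose_mul_self_of_posDef hQ
  have hgauss := (integrable_exp_neg_half_mul_dotProduct_self (Fin n)).comp_sub_right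
    (b.ofLp ᵥ* B⁻¹)
  have hdet : (Bᵀ * B).det ^ (-(1 / 2) : ℝ) = |B.det|⁻¹ := by
    rw [det_mul, det_transpose, ← abs_mul_abs_self, ← pow_two, Real.rpow_neg (by positivity),
      ← Real.sqrt_eq_rpow, Real.sqrt_sq (abs_nonneg _)]
  have hofLp := EuclideanSpace.volume_preserving_symm_measurableEquiv_toLp (Fin n)
  have hemb := (MeasurableEquiv.toLp 2 (Fin n → ℝ)).symm.measurableEmbedding
  simp only [neg_half_mul_quadratic_add_source hB, Real.exp_add]
  constructor
  · exact (hofLp.integrable_comp_emb hemb).mpr ((integrable_comp_mulVec hB hgauss).mul_const _)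
  · rw [integral_mul_const, hdet]
    congr 1
    refine (hofLp.integral_comp hemb
      fun x => Real.exp (-(1 / 2) * ((B *ᵥ x - b.ofLp ᵥ* B⁻¹) ⬝ᵥ (B *ᵥ x - b.ofLp ᵥ* B⁻¹)))).trans ?_
    rw [integral_comp_mulVec hB hgauss,
      integral_sub_right_eq_self (fun y : Fin n → ℝ => Real.exp (-(1 / 2) * (y ⬝ᵥ y))),
      integral_exp_neg_half_mul_dotProduct_self, Fintype.card_fin, mul_comm]
end

section
/- Differentiation of the source integral: the function F : ℝⁿ → ℝ defined by F(b) = ∫ exp(−(1/2)·⟨x, Q·x⟩ + ⟨b, x⟩) dx is differentiable, and for each index i its partial derivative in the i-th coordinate direction at any b ∈ ℝⁿ equals ∫ xᵢ · exp(−(1/2)·⟨x, Q·x⟩ + ⟨b, x⟩) dx; in particular the integrand x ↦ xᵢ · exp(−(1/2)·⟨x, Q·x⟩ + ⟨b, x⟩) is integrable for every b. -/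
open Matrix MeasureTheory Real

/-- The quadratic form of a positive-definite matrix is bounded below by a positive multiple of
the squared Euclidean norm. -/
theorem Matrix.PosDef.exists_pos_mul_norm_sq_le {ι : Type*} [Fintype ι] {Q : Matrix ι ι ℝ}
    (hQ : Q.PosDef) :
    ∃ c : ℝ, 0 < c ∧ ∀ x : EuclideanSpace ℝ ι, c * ‖x‖ ^ 2 ≤ x ⬝ᵥ Q.mulVec x := by
  have hcont : Continuous fun x : EuclideanSpace ℝ ι => x ⬝ᵥ Q.mulVec x := by fun_prop
  have hpos : ∀ x ∈ Metric.sphere (0 : EuclideanSpace ℝ ι) 1, 0 < x ⬝ᵥ Q.mulVec x := by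
    intro x hx
    have hx0 : x.ofLp ≠ 0 := by
      rw [Ne, WithLp.ofLp_eq_zero]
      exact ne_zero_of_mem_unit_sphere ⟨x, hx⟩
    simpa using hQ.dotProduct_mulVec_pos hx0
  obtain ⟨c, hc, hle⟩ := (isCompact_sphere (0 : EuclideanSpace ℝ ι) 1).exists_forall_le'
    hcont.continuousOn hpos
  refine ⟨c, hc, fun x => ?_⟩
  rcases eq_or_ne x 0 with rfl | hx
  · simp
  have hn : 0 < ‖x‖ := norm_pos_iff.mpr hx
  have hunit := hle (‖x‖⁻¹ • x) (by simp [norm_smul, hn.ne'])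
  simp only [WithLp.ofLp_smul, mulVec_smul, smul_dotProduct, dotProduct_smul, smul_eq_mul] at hunit
  calc c * ‖x‖ ^ 2 ≤ (‖x‖⁻¹ * (‖x‖⁻¹ * (x ⬝ᵥ Q.mulVec x))) * ‖x‖ ^ 2 := by gcongr
    _ = x ⬝ᵥ Q.mulVec x := by field_simp

/-- Locally uniformly in the source `b`, the Gaussian weight with a linear factor is dominated by
an integrable function. -/
theorem Matrix.PosDef.exists_integrable_gaussian_bound {ι : Type*} [Fintype ι] {Q : Matrix ι ι ℝ}
    (hQ : Q.PosDef) (R : ℝ) :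
    ∃ g : EuclideanSpace ℝ ι → ℝ, Integrable g ∧ ∀ b x : EuclideanSpace ℝ ι, ‖b‖ ≤ R →
      (‖x‖ + 1) * Real.exp (-(1 / 2) * (x ⬝ᵥ Q.mulVec x) + b ⬝ᵥ x) ≤ g x := by
  obtain ⟨c, hc, hcoer⟩ := hQ.exists_pos_mul_norm_sq_le
  refine ⟨fun x => Real.exp ((R + 1) ^ 2 / c) * Real.exp (-(c / 4) * ‖x‖ ^ 2), ?_, ?_⟩
  · have hint := (GaussianFourier.integrable_cexp_neg_mul_sq_norm_add
      (V := EuclideanSpace ℝ ι) (b := ((c / 4 : ℝ) : ℂ)) (by simpa using hc) 0 0).norm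
    refine Integrable.const_mul (hint.congr (.of_forall fun x => ?_)) _
    simp only [zero_mul, add_zero, Complex.norm_exp]
    norm_cast
  · intro b x hb
    have hsource : b ⬝ᵥ x ≤ R * ‖x‖ :=
      calc b ⬝ᵥ x = inner ℝ x b := by simp [EuclideanSpace.inner_eq_star_dotProduct]
        _ ≤ ‖x‖ * ‖b‖ := real_inner_le_norm x b
        _ ≤ R * ‖x‖ := by rw [mul_comm]; gcongr
    have hsquare : (R + 1) * ‖x‖ ≤ (R + 1) ^ 2 / c + c / 4 * ‖x‖ ^ 2 := by
      have : (R + 1) ^ 2 / c + c / 4 * ‖x‖ ^ 2 - (R + 1) * ‖x‖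
          = ((R + 1) - c / 2 * ‖x‖) ^ 2 / c := by field_simp; ring
      have : 0 ≤ ((R + 1) - c / 2 * ‖x‖) ^ 2 / c := by positivity
      linarith
    calc (‖x‖ + 1) * Real.exp (-(1 / 2) * (x ⬝ᵥ Q.mulVec x) + b ⬝ᵥ x)
        ≤ Real.exp ‖x‖ * Real.exp (-(1 / 2) * (x ⬝ᵥ Q.mulVec x) + b ⬝ᵥ x) := by
          gcongr
          exact Real.add_one_le_exp _
      _ ≤ Real.exp ((R + 1) ^ 2 / c) * Real.exp (-(c / 4) * ‖x‖ ^ 2) := by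
          rw [← Real.exp_add, ← Real.exp_add, Real.exp_le_exp]
          linarith [hcoer x]

/-- The Gaussian weight with a linear vector factor is integrable, and the source integral is
Fréchet differentiable with derivative obtained by differentiating under the integral sign. -/
theorem Matrix.PosDef.hasFDerivAt_gaussian_source_integral {ι : Type*} [Fintype ι]
    {Q : Matrix ι ι ℝ} (hQ : Q.PosDef) (b : EuclideanSpace ℝ ι) :
    Integrable (fun x : EuclideanSpace ℝ ι =>
      Real.exp (-(1 / 2) * (x ⬝ᵥ Q.mulVec x) + b ⬝ᵥ x) • innerSL ℝ x) ∧
    HasFDerivAt (fun b : EuclideanSpace ℝ ι => ∫ x : EuclideanSpace ℝ ι,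
        Real.exp (-(1 / 2) * (x ⬝ᵥ Q.mulVec x) + b ⬝ᵥ x))
      (∫ x : EuclideanSpace ℝ ι,
        Real.exp (-(1 / 2) * (x ⬝ᵥ Q.mulVec x) + b ⬝ᵥ x) • innerSL ℝ x) b := by
  obtain ⟨g, hg, hbound⟩ := hQ.exists_integrable_gaussian_bound (‖b‖ + 1)
  have hcont (b : EuclideanSpace ℝ ι) : Continuous fun x : EuclideanSpace ℝ ι =>
      Real.exp (-(1 / 2) * (x ⬝ᵥ Q.mulVec x) + b ⬝ᵥ x) := by fun_prop
  have hcont' : Continuous fun x : EuclideanSpace ℝ ι =>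
      Real.exp (-(1 / 2) * (x ⬝ᵥ Q.mulVec x) + b ⬝ᵥ x) • innerSL ℝ x :=
    (hcont b).smul (innerSL ℝ).continuous
  have hnorm (b' x : EuclideanSpace ℝ ι) (hb' : ‖b'‖ ≤ ‖b‖ + 1) :
      ‖Real.exp (-(1 / 2) * (x ⬝ᵥ Q.mulVec x) + b' ⬝ᵥ x) • innerSL ℝ x‖ ≤ g x := by
    rw [norm_smul, innerSL_apply_norm, Real.norm_eq_abs, Real.abs_exp]
    linarith [hbound b' x hb', Real.exp_pos (-(1 / 2) * (x ⬝ᵥ Q.mulVec x) + b' ⬝ᵥ x)]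
  have hb : ‖b‖ ≤ ‖b‖ + 1 := by linarith
  have hint : Integrable fun x : EuclideanSpace ℝ ι =>
      Real.exp (-(1 / 2) * (x ⬝ᵥ Q.mulVec x) + b ⬝ᵥ x) := by
    refine hg.mono' (hcont b).aestronglyMeasurable (.of_forall fun x => ?_)
    rw [Real.norm_eq_abs, Real.abs_exp]
    refine le_trans (le_mul_of_one_le_left (Real.exp_pos _).le ?_) (hbound b x hb)
    linarith [norm_nonneg x]
  refine ⟨hg.mono' hcont'.aestronglyMeasurable (.of_forall fun x => hnorm b x hb), ?_⟩
  refine hasFDerivAt_integral_of_dominated_of_fderiv_le (bound := g)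
    (F' := fun (b' x : EuclideanSpace ℝ ι) =>
      Real.exp (-(1 / 2) * (x ⬝ᵥ Q.mulVec x) + b' ⬝ᵥ x) • innerSL ℝ x)
    (Metric.ball_mem_nhds b one_pos) (.of_forall fun b' => (hcont b').aestronglyMeasurable) hint
    hcont'.aestronglyMeasurable (.of_forall fun x b' hb' => hnorm b' x ?_) hg
    (.of_forall fun x b' _ => ?_)
  · rw [mem_ball_iff_norm] at hb'
    linarith [norm_sub_norm_le b' b]
  · have hlin : HasFDerivAt (fun b : EuclideanSpace ℝ ι => b ⬝ᵥ x) (innerSL ℝ x) b' := by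
      convert (innerSL ℝ x).hasFDerivAt using 2 with b
      simp [EuclideanSpace.inner_eq_star_dotProduct]
    exact (hlin.const_add _).exp

/-- **Differentiation of the source integral.**
Let `Q` be a real symmetric positive-definite `n × n` matrix and let
`F b = ∫ exp (-(1/2)⟨x, Q·x⟩ + ⟨b, x⟩) dx`.  Then `F` is differentiable, and for each
index `i` and each `b` the integrand `x ↦ xᵢ · exp (-(1/2)⟨x, Q·x⟩ + ⟨b, x⟩)` is
integrable and the partial derivative of `F` at `b` in the `i`-th coordinate direction
equals `∫ xᵢ · exp (-(1/2)⟨x, Q·x⟩ + ⟨b, x⟩) dx`. -/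
theorem gaussian_source_integral_differentiable (n : ℕ) (Q : Matrix (Fin n) (Fin n) ℝ)
    (hQ : Q.PosDef) (hQsymm : Q.IsSymm) :
    Differentiable ℝ (fun b : EuclideanSpace ℝ (Fin n) =>
        ∫ x : EuclideanSpace ℝ (Fin n),
          Real.exp (-(1 / 2) * (x ⬝ᵥ Q.mulVec x) + b ⬝ᵥ x)) ∧
    ∀ (i : Fin n) (b : EuclideanSpace ℝ (Fin n)),
      Integrable (fun x : EuclideanSpace ℝ (Fin n) =>
          x i * Real.exp (-(1 / 2) * (x ⬝ᵥ Q.mulVec x) + b ⬝ᵥ x)) ∧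
      fderiv ℝ (fun b : EuclideanSpace ℝ (Fin n) =>
            ∫ x : EuclideanSpace ℝ (Fin n),
              Real.exp (-(1 / 2) * (x ⬝ᵥ Q.mulVec x) + b ⬝ᵥ x))
          b (EuclideanSpace.single i 1)
        = ∫ x : EuclideanSpace ℝ (Fin n),
            x i * Real.exp (-(1 / 2) * (x ⬝ᵥ Q.mulVec x) + b ⬝ᵥ x) := by
  have hderiv := hQ.hasFDerivAt_gaussian_source_integral
  refine ⟨fun b => (hderiv b).2.differentiableAt, fun i b => ?_⟩
  have happly (x : EuclideanSpace ℝ (Fin n)) :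
      (Real.exp (-(1 / 2) * (x ⬝ᵥ Q.mulVec x) + b ⬝ᵥ x) • innerSL ℝ x) (EuclideanSpace.single i 1)
        = x i * Real.exp (-(1 / 2) * (x ⬝ᵥ Q.mulVec x) + b ⬝ᵥ x) := by
    simp [EuclideanSpace.inner_single_right, mul_comm]
  obtain ⟨hint, hfderiv⟩ := hderiv b
  refine ⟨?_, ?_⟩
  · simpa only [happly] using hint.apply_continuousLinearMap (EuclideanSpace.single i 1)
  · rw [hfderiv.fderiv, ContinuousLinearMap.integral_apply hint]
    simp only [happly]
end

section
/- Wick's formula for the fourth moment: for all indices i, j, k, l, ∫ xᵢ·xⱼ·xₖ·xₗ·exp(−(1/2)·⟨x, Q·x⟩) dx = (2π)^{n/2} · (det Q)^{−1/2} · ((Q⁻¹)ᵢⱼ·(Q⁻¹)ₖₗ + (Q⁻¹)ᵢₖ·(Q⁻¹)ⱼₗ + (Q⁻¹)ᵢₗ·(Q⁻¹)ⱼₖ), i.e. the fourth moment is the sum over the three perfect pairings of {i, j, k, l}, each pairing contributing the product of the corresponding entries of Q⁻¹. -/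
open Matrix MeasureTheory Real

namespace GaussianMoment

/-- Every monomial is integrable against the standard Gaussian weight. -/
lemma integrable_pow_mul_exp (k : ℕ) :
    Integrable fun x : ℝ => x ^ k * Real.exp (-(1 / 2) * x ^ 2) := by
  have h := integrable_rpow_mul_exp_neg_mul_sq (b := 1 / 2) (by norm_num) (s := (k : ℝ))
    (by have : (0 : ℝ) ≤ k := k.cast_nonneg
        linarith)
  simpa only [Real.rpow_natCast] using h

/-- Integration by parts for the moments of the standard Gaussian weight. -/
lemma integral_pow_succ_mul_exp (k : ℕ) :
    ∫ x : ℝ, x ^ (k + 1) * Real.exp (-(1 / 2) * x ^ 2)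
      = k * ∫ x : ℝ, x ^ (k - 1) * Real.exp (-(1 / 2) * x ^ 2) := by
  have hderiv : ∀ x : ℝ, HasDerivAt (fun x : ℝ => x ^ k * Real.exp (-(1 / 2) * x ^ 2))
      (k * (x ^ (k - 1) * Real.exp (-(1 / 2) * x ^ 2))
        - x ^ (k + 1) * Real.exp (-(1 / 2) * x ^ 2)) x := by
    intro x
    have h := (hasDerivAt_pow k x).mul
      (((hasDerivAt_pow 2 x).const_mul (-(1 / 2) : ℝ)).exp)
    refine h.congr_deriv ?_
    push_cast
    ring
  have hintegrable := (integrable_pow_mul_exp (k - 1)).const_mul (k : ℝ)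
  have h := integral_eq_zero_of_hasDerivAt_of_integrable hderiv
    (hintegrable.sub (integrable_pow_mul_exp (k + 1))) (integrable_pow_mul_exp k)
  rw [integral_sub hintegrable (integrable_pow_mul_exp (k + 1)), integral_const_mul] at h
  linarith

/-- The normalized moments of the one-dimensional standard Gaussian. -/
def stdMoment : ℕ → ℝ
  | 0 => 1
  | 1 => 0
  | k + 2 => (k + 1) * stdMoment k

lemma integral_pow_mul_exp (k : ℕ) :
    ∫ x : ℝ, x ^ k * Real.exp (-(1 / 2) * x ^ 2) = √(2 * π) * stdMoment k := by
  induction k using stdMoment.induct with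
  | case1 =>
    have h := integral_gaussian (1 / 2)
    simp only [pow_zero, one_mul, stdMoment, mul_one]
    rw [h]
    congr 1
    ring
  | case2 => simpa [stdMoment] using integral_pow_succ_mul_exp 0
  | case3 k ih =>
    rw [integral_pow_succ_mul_exp (k + 1), Nat.add_sub_cancel, ih, stdMoment]
    push_cast
    ring

variable {n : ℕ}

/-- The multiplicity of `m` in the list `a, b, c, d`. -/
def mult (a b c d m : Fin n) : ℕ :=
  (if a = m then 1 else 0) + (if b = m then 1 else 0) + (if c = m then 1 else 0)
    + (if d = m then 1 else 0)

lemma monomial_mul_exp_eq_prod (a b c d : Fin n) (y : Fin n → ℝ) :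
    y a * y b * y c * y d * Real.exp (-(1 / 2) * (y ⬝ᵥ y))
      = ∏ m, (y m ^ mult a b c d m * Real.exp (-(1 / 2) * y m ^ 2)) := by
  rw [Finset.prod_mul_distrib, ← Real.exp_sum, ← Finset.mul_sum]
  simp only [mult, pow_add, Finset.prod_mul_distrib, dotProduct, ← sq]
  have h (a : Fin n) : ∏ m, y m ^ (if a = m then 1 else 0) = y a := by
    simp [pow_ite]
  simp only [h]

lemma integrable_monomial_mul_exp (a b c d : Fin n) :
    Integrable fun y : Fin n → ℝ =>
      y a * y b * y c * y d * Real.exp (-(1 / 2) * (y ⬝ᵥ y)) := by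
  simp only [monomial_mul_exp_eq_prod]
  exact Integrable.fintype_prod
    (f := fun m (t : ℝ) => t ^ mult a b c d m * Real.exp (-(1 / 2) * t ^ 2))
    fun m => integrable_pow_mul_exp _

/-- The sum over pairings for the identity covariance. -/
lemma prod_stdMoment (a b c d : Fin n) :
    ∏ m, stdMoment (mult a b c d m)
      = (1 : Matrix (Fin n) (Fin n) ℝ) a b * (1 : Matrix (Fin n) (Fin n) ℝ) c d
        + (1 : Matrix (Fin n) (Fin n) ℝ) a c * (1 : Matrix (Fin n) (Fin n) ℝ) b d
        + (1 : Matrix (Fin n) (Fin n) ℝ) a d * (1 : Matrix (Fin n) (Fin n) ℝ) b c := by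
  have vanish (m : Fin n) (h : stdMoment (mult a b c d m) = 0) :
      ∏ m, stdMoment (mult a b c d m) = 0 :=
    Finset.prod_eq_zero (Finset.mem_univ m) h
  have paired (p q : Fin n) (hpq : p ≠ q)
      (h : ∀ m, mult a b c d m = (if p = m then 2 else 0) + (if q = m then 2 else 0)) :
      ∏ m, stdMoment (mult a b c d m) = 1 := by
    refine Finset.prod_eq_one fun m _ => ?_
    rw [h]
    by_cases hp : p = m
    · have hq : q ≠ m := fun hq => hpq (hp.trans hq.symm)
      simp [hp, hq, stdMoment]
    · by_cases hq : q = m <;> simp [hp, hq, stdMoment]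
  by_cases hab : a = b
  · subst hab
    by_cases hcd : c = d
    · subst hcd
      by_cases hac : a = c
      · subst hac
        rw [Finset.prod_eq_single a]
        · norm_num [mult, stdMoment]
        · intro m _ hm
          simp [mult, hm.symm, stdMoment]
        · simp
      · rw [paired a c hac fun m => by simp only [mult]; split_ifs <;> rfl]
        simp [hac]
    · by_cases hac : a = c
      · subst hac
        rw [vanish d (by simp [mult, hcd, stdMoment])]
        simp [hcd]
      · rw [vanish c (by simp [mult, hac, Ne.symm hcd, stdMoment])]
        simp [Matrix.one_apply, hac, hcd]
  · by_cases hac : a = c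
    · subst hac
      by_cases hbd : b = d
      · subst hbd
        rw [paired a b hab fun m => by simp only [mult]; split_ifs <;> rfl]
        simp [Matrix.one_apply, hab]
      · rw [vanish b (by simp [mult, hab, Ne.symm hbd, stdMoment])]
        simp [Matrix.one_apply, hab, hbd, Ne.symm hab]
    · by_cases had : a = d
      · subst had
        by_cases hbc : b = c
        · subst hbc
          rw [paired a b hab fun m => by simp only [mult]; split_ifs <;> rfl]
          simp [Matrix.one_apply, hab]
        · rw [vanish b (by simp [mult, hab, Ne.symm hbc, stdMoment])]
          simp [Matrix.one_apply, hab, hbc, hac]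
      · rw [vanish a (by
          simp [mult, Ne.symm hab, Ne.symm hac, Ne.symm had, stdMoment])]
        simp [Matrix.one_apply, hab, hac, had]

/-- Wick's formula for the standard Gaussian weight. -/
lemma integral_monomial_mul_exp (a b c d : Fin n) :
    ∫ y : Fin n → ℝ, y a * y b * y c * y d * Real.exp (-(1 / 2) * (y ⬝ᵥ y))
      = (2 * π) ^ ((n : ℝ) / 2)
        * ((1 : Matrix (Fin n) (Fin n) ℝ) a b * (1 : Matrix (Fin n) (Fin n) ℝ) c d
        + (1 : Matrix (Fin n) (Fin n) ℝ) a c * (1 : Matrix (Fin n) (Fin n) ℝ) b d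
        + (1 : Matrix (Fin n) (Fin n) ℝ) a d * (1 : Matrix (Fin n) (Fin n) ℝ) b c) := by
  simp only [monomial_mul_exp_eq_prod]
  rw [integral_fintype_prod_volume_eq_prod
    (f := fun m (t : ℝ) => t ^ mult a b c d m * Real.exp (-(1 / 2) * t ^ 2))]
  simp only [integral_pow_mul_exp]
  rw [Finset.prod_mul_distrib, prod_stdMoment, Finset.prod_const, Finset.card_univ,
    Fintype.card_fin, Real.sqrt_eq_rpow, ← Real.rpow_natCast, ← Real.rpow_mul (by positivity)]
  congr 2
  ring

lemma sum_mul_mul_mul (f g h p : Fin n → ℝ) :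
    ∑ a, ∑ b, ∑ c, ∑ d, f a * g b * h c * p d
      = (∑ a, f a) * (∑ b, g b) * (∑ c, h c) * ∑ d, p d := by
  simp only [← Finset.mul_sum, ← Finset.sum_mul]

/-- Fourth moments of linear functionals of a standard Gaussian vector. -/
lemma integral_mulVec_monomial_mul_exp (A : Matrix (Fin n) (Fin n) ℝ) (i j k l : Fin n) :
    ∫ y : Fin n → ℝ, (A *ᵥ y) i * (A *ᵥ y) j * (A *ᵥ y) k * (A *ᵥ y) l
        * Real.exp (-(1 / 2) * (y ⬝ᵥ y))
      = (2 * π) ^ ((n : ℝ) / 2)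
        * ((A * Aᵀ) i j * (A * Aᵀ) k l + (A * Aᵀ) i k * (A * Aᵀ) j l
          + (A * Aᵀ) i l * (A * Aᵀ) j k) := by
  have expand (y : Fin n → ℝ) :
      (A *ᵥ y) i * (A *ᵥ y) j * (A *ᵥ y) k * (A *ᵥ y) l * Real.exp (-(1 / 2) * (y ⬝ᵥ y))
        = ∑ a, ∑ b, ∑ c, ∑ d, A i a * A j b * A k c * A l d
          * (y a * y b * y c * y d * Real.exp (-(1 / 2) * (y ⬝ᵥ y))) := by
    have h := sum_mul_mul_mul (fun a => A i a * y a) (fun b => A j b * y b)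
      (fun c => A k c * y c) (fun d => A l d * y d)
    simp only [mulVec]
    rw [dotProduct, dotProduct, dotProduct, dotProduct, ← h]
    simp only [Finset.sum_mul]
    refine Finset.sum_congr rfl fun a _ => Finset.sum_congr rfl fun b _ =>
      Finset.sum_congr rfl fun c _ => Finset.sum_congr rfl fun d _ => ?_
    ring
  have hintegrable (a b c d : Fin n) := (integrable_monomial_mul_exp a b c d).const_mul
    (A i a * A j b * A k c * A l d)
  simp only [expand]
  rw [integral_finsetSum _ fun a _ => integrable_finsetSum _ fun b _ =>
    integrable_finsetSum _ fun c _ => integrable_finsetSum _ fun d _ => hintegrable a b c d]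
  simp_rw [integral_finsetSum _ fun b _ =>
    integrable_finsetSum _ fun c _ => integrable_finsetSum _ fun d _ => hintegrable _ b c d,
    integral_finsetSum _ fun c _ => integrable_finsetSum _ fun d _ => hintegrable _ _ c d,
    integral_finsetSum _ fun d _ => hintegrable _ _ _ d, integral_const_mul,
    integral_monomial_mul_exp, mul_left_comm _ ((2 * π) ^ ((n : ℝ) / 2)), ← Finset.mul_sum]
  congr 1
  simp only [mul_add, Finset.sum_add_distrib]
  simp only [Matrix.one_apply, mul_ite, mul_one, mul_zero, Finset.sum_ite_eq,
    Finset.mem_univ, if_true, Finset.sum_ite_irrel, Finset.sum_const_zero,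
    Matrix.mul_apply, transpose_apply, Finset.sum_mul_sum]
  simp only [← Finset.sum_add_distrib]
  refine Finset.sum_congr rfl fun a _ => Finset.sum_congr rfl fun b _ => ?_
  ring

/-- A positive definite real matrix is of the form `Bᵀ * B`. -/
lemma exists_eq_transpose_mul_self {Q : Matrix (Fin n) (Fin n) ℝ} (hQ : Q.PosDef) :
    ∃ B : Matrix (Fin n) (Fin n) ℝ, Q = Bᵀ * B := by
  open scoped MatrixOrder in
  obtain ⟨B, hB⟩ := CStarAlgebra.nonneg_iff_eq_star_mul_self.mp hQ.posSemidef.nonneg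
  exact ⟨B, by simpa [star_eq_conjTranspose] using hB⟩

/-- Linear change of variables by an invertible matrix. -/
lemma integral_comp_mulVec {B : Matrix (Fin n) (Fin n) ℝ} (hB : B.det ≠ 0)
    {F : (Fin n → ℝ) → ℝ} (hF : Continuous F) :
    ∫ x, F (B *ᵥ x) = |B.det|⁻¹ * ∫ y, F y := by
  have hmeas : Measurable (toLin' B) := (toLin' B).continuous_of_finiteDimensional.measurable
  have h := integral_map (μ := volume) hmeas.aemeasurable hF.aestronglyMeasurable
  rw [Real.map_matrix_volume_pi_eq_smul_volume_pi hB, integral_smul_measure,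
    ENNReal.toReal_ofReal (abs_nonneg _), abs_inv, smul_eq_mul] at h
  simpa only [toLin'_apply] using h.symm

end GaussianMoment

open GaussianMoment in
/-- **Wick's formula for the fourth Gaussian moment.**
Let `Q` be a real symmetric positive-definite `n × n` matrix.  For all indices
`i, j, k, l`:
`∫ xᵢ·xⱼ·xₖ·xₗ·exp (-(1/2)⟨x, Q·x⟩) dx
  = (2π)^{n/2}·(det Q)^{-1/2}·((Q⁻¹)ᵢⱼ(Q⁻¹)ₖₗ + (Q⁻¹)ᵢₖ(Q⁻¹)ⱼₗ + (Q⁻¹)ᵢₗ(Q⁻¹)ⱼₖ)`,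
the sum over the three perfect pairings of `{i, j, k, l}`. -/
theorem gaussian_fourth_moment_wick (n : ℕ) (Q : Matrix (Fin n) (Fin n) ℝ)
    (hQ : Q.PosDef) (hQsymm : Q.IsSymm) (i j k l : Fin n) :
    ∫ x : EuclideanSpace ℝ (Fin n),
        x i * x j * x k * x l * Real.exp (-(1 / 2) * (x ⬝ᵥ Q.mulVec x))
      = (2 * π) ^ ((n : ℝ) / 2) * Q.det ^ (-(1 / 2) : ℝ)
          * (Q⁻¹ i j * Q⁻¹ k l + Q⁻¹ i k * Q⁻¹ j l + Q⁻¹ i l * Q⁻¹ j k) := by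
  rw [← (PiLp.volume_preserving_toLp (Fin n)).integral_comp
    (MeasurableEquiv.toLp 2 (Fin n → ℝ)).measurableEmbedding]
  obtain ⟨B, rfl⟩ := exists_eq_transpose_mul_self hQ
  have hdetQ : (Bᵀ * B).det = |B.det| ^ 2 := by
    rw [det_mul, det_transpose, sq_abs, sq]
  have hdet : B.det ≠ 0 := by
    intro h
    have := hQ.det_pos
    simp [hdetQ, h] at this
  have hinv : B⁻¹ * B = 1 := nonsing_inv_mul B hdet.isUnit
  have hchange := integral_comp_mulVec hdet
    (F := fun y => (B⁻¹ *ᵥ y) i * (B⁻¹ *ᵥ y) j * (B⁻¹ *ᵥ y) k * (B⁻¹ *ᵥ y) l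
      * Real.exp (-(1 / 2) * (y ⬝ᵥ y))) (by
        simp only [mulVec, dotProduct]
        fun_prop)
  have hquad (x : Fin n → ℝ) : x ⬝ᵥ ((Bᵀ * B) *ᵥ x) = (B *ᵥ x) ⬝ᵥ (B *ᵥ x) := by
    rw [← mulVec_mulVec, dotProduct_mulVec, vecMul_transpose]
  have hQinv : B⁻¹ * B⁻¹ᵀ = (Bᵀ * B)⁻¹ := by
    rw [Matrix.mul_inv_rev, transpose_nonsing_inv]
  have hdetpow : (Bᵀ * B).det ^ (-(1 / 2) : ℝ) = |B.det|⁻¹ := by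
    rw [hdetQ, ← Real.rpow_natCast, ← Real.rpow_mul (abs_nonneg _)]
    norm_num [Real.rpow_neg_one]
  simp only [mulVec_mulVec, hinv, one_mulVec, integral_mulVec_monomial_mul_exp, hQinv] at hchange
  rw [hdetpow]
  simp only [hquad]
  rw [hchange]
  ring
end
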